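/- Let X = (X_t)_{t≥0} be a real-valued additive process (X_0 = 0, independent increments, continuous in probability, cadlag paths) with E[X_t] = 0 and E[|X_t|^n] < ∞ for all n ≥ 1 and t ≥ 0. Then for every even n ≥ 2 the cumulant function t ↦ F_n(t) is monotone nondecreasing on [0, ∞). -/

import Mathlib

open MeasureTheory ProbabilityTheory Filter Topology
open scoped NNReal

/-- The Kendall polynomials `Γ_n`, expressing moments in terms of cumulants:
`Γ_0 = 1` and `Γ_{n+1}(x_1,…,x_{n+1}) = Σ_{j=0}^n C(n,j) Γ_j(x_1,…,x_j) x_{n+1-j}`.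
The argument function `x : ℕ → ℝ` encodes the variables `x_1, x_2, …`
(only the values `x 1, …, x n` are used by `kendall n x`). -/
noncomputable def kendall : ℕ → (ℕ → ℝ) → ℝ
  | 0, _ => 1
  | n + 1, x =>
      ∑ j ∈ (Finset.range (n + 1)).attach,
        (n.choose j.1 : ℝ) * kendall j.1 x * x (n + 1 - j.1)
decreasing_by exact Finset.mem_range.mp j.2

/-- A function `f : ℝ≥0 → ℝ` is cadlag: right-continuous with left limits. -/
def IsCadlag (f : ℝ≥0 → ℝ) : Prop :=
  (∀ t : ℝ≥0, ContinuousWithinAt f (Set.Ici t) t) ∧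
    ∀ t : ℝ≥0, 0 < t → ∃ l : ℝ, Tendsto f (𝓝[<] t) (𝓝 l)

theorem kendall_zero' (x : ℕ → ℝ) : kendall 0 x = 1 := by
  rw [kendall]

theorem kendall_succ' (n : ℕ) (x : ℕ → ℝ) : kendall (n + 1) x =
    ∑ j ∈ Finset.range (n + 1), (n.choose j : ℝ) * kendall j x * x (n + 1 - j) := by
  rw [kendall]
  exact Finset.sum_attach (Finset.range (n + 1))
    (fun j => (n.choose j : ℝ) * kendall j x * x (n + 1 - j))

/-- exponential generating function -/
noncomputable def egf (a : ℕ → ℝ) : PowerSeries ℝ :=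
  PowerSeries.mk fun n => a n / (n.factorial : ℝ)

theorem egf_inj {a b : ℕ → ℝ} (h : egf a = egf b) : a = b := by
  funext n
  have h1 := congrArg (PowerSeries.coeff n) h
  simp only [egf, PowerSeries.coeff_mk] at h1
  have : (n.factorial : ℝ) ≠ 0 := by positivity
  field_simp at h1
  exact h1

theorem egf_mul (a b : ℕ → ℝ) : egf a * egf b =
    egf (fun n => ∑ m ∈ Finset.HasAntidiagonal.antidiagonal n, (n.choose m.1 : ℝ) * (a m.1 * b m.2)) := by
  ext n
  simp only [egf, PowerSeries.coeff_mk, PowerSeries.coeff_mul]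
  rw [Finset.sum_div]
  refine Finset.sum_congr rfl fun m hm => ?_
  rw [Finset.HasAntidiagonal.mem_antidiagonal] at hm
  have h2 : (n.choose m.1 : ℝ) * m.1.factorial * m.2.factorial = n.factorial := by
    have h3 := Nat.choose_mul_factorial_mul_factorial (n := n) (k := m.1) (by omega)
    have h4 : n - m.1 = m.2 := by omega
    rw [h4] at h3
    exact_mod_cast h3
  have e1 : (m.1.factorial : ℝ) ≠ 0 := by positivity
  have e2 : (m.2.factorial : ℝ) ≠ 0 := by positivity
  have e3 : (n.factorial : ℝ) ≠ 0 := by positivity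
  field_simp
  rw [← h2]; ring

theorem egf_deriv (a : ℕ → ℝ) : PowerSeries.derivative ℝ (egf a) = egf (fun n => a (n + 1)) := by
  ext n
  rw [PowerSeries.coeff_derivative]
  simp only [egf, PowerSeries.coeff_mk, Nat.factorial_succ]
  have e3 : (n.factorial : ℝ) ≠ 0 := by positivity
  have e4 : (n + 1 : ℝ) ≠ 0 := by positivity
  push_cast
  field_simp

theorem egf_kendall_deriv (x : ℕ → ℝ) :
    PowerSeries.derivative ℝ (egf fun n => kendall n x)
      = egf (fun n => kendall n x) * egf (fun n => x (n + 1)) := by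
  rw [egf_deriv, egf_mul]
  congr 1
  funext n
  rw [kendall_succ', Finset.Nat.sum_antidiagonal_eq_sum_range_succ_mk]
  refine Finset.sum_congr rfl fun j hj => ?_
  rw [Finset.mem_range] at hj
  have : n + 1 - j = n - j + 1 := by omega
  simp only [this]
  ring

theorem egf_const (a : ℕ → ℝ) : PowerSeries.constantCoeff (egf a) = a 0 := by
  rw [← PowerSeries.coeff_zero_eq_constantCoeff_apply]
  simp [egf]

theorem ps_unique (K f g : PowerSeries ℝ) (hf : PowerSeries.derivative ℝ f = f * K)
    (hg : PowerSeries.derivative ℝ g = g * K)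
    (h0 : PowerSeries.constantCoeff f = PowerSeries.constantCoeff g) : f = g := by
  ext n
  induction n using Nat.strong_induction_on with
  | _ n ih =>
    cases n with
    | zero => simpa using h0
    | succ n =>
      have h1 := congrArg (PowerSeries.coeff n) hf
      have h2 := congrArg (PowerSeries.coeff n) hg
      rw [PowerSeries.coeff_derivative, PowerSeries.coeff_mul] at h1 h2
      have h3 : ∑ p ∈ Finset.HasAntidiagonal.antidiagonal n, PowerSeries.coeff p.1 f * PowerSeries.coeff p.2 K
          = ∑ p ∈ Finset.HasAntidiagonal.antidiagonal n, PowerSeries.coeff p.1 g * PowerSeries.coeff p.2 K := by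
        refine Finset.sum_congr rfl fun p hp => ?_
        rw [Finset.HasAntidiagonal.mem_antidiagonal] at hp
        rw [ih p.1 (by omega)]
      rw [h3, ← h2] at h1
      have e4 : (n + 1 : ℝ) ≠ 0 := by positivity
      exact mul_right_cancel₀ e4 h1

theorem egf_kendall_add (x y : ℕ → ℝ) :
    egf (fun n => kendall n (fun k => x k + y k))
      = egf (fun n => kendall n x) * egf (fun n => kendall n y) := by
  refine ps_unique (egf (fun n => x (n + 1)) + egf (fun n => y (n + 1))) _ _ ?_ ?_ ?_
  · rw [egf_kendall_deriv]
    congr 1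
    ext n
    simp [egf, add_div]
  · rw [Derivation.leibniz, egf_kendall_deriv, egf_kendall_deriv]
    simp only [smul_eq_mul]
    ring
  · simp [egf_const, kendall_zero']

/-- Cumulant increments are cumulants of the increment. -/
theorem kendall_increment (a b c x y : ℕ → ℝ) (ha : ∀ n, a n = kendall n x)
    (hb : ∀ n, b n = kendall n y)
    (hc : ∀ n, b n = ∑ m ∈ Finset.HasAntidiagonal.antidiagonal n, (n.choose m.1 : ℝ) * (a m.1 * c m.2)) (n : ℕ) :
    c n = kendall n (fun k => y k - x k) := by
  have h1 : egf b = egf a * egf c := by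
    rw [egf_mul]; congr 1; funext n; exact hc n
  have h2 := egf_kendall_add x (fun k => y k - x k)
  simp only [add_sub_cancel] at h2
  rw [← funext ha, ← funext hb, h1] at h2
  have h3 : egf a ≠ 0 := by
    intro h
    have := egf_const a
    rw [h, ha 0, kendall_zero'] at this
    simp at this
  exact congrFun (egf_inj (mul_left_cancel₀ h3 h2)) n

/-- Analytic bound on cumulants with vanishing moments. -/
theorem cumulant_tendsto {ι : Type*} (l : Filter ι) (m x : ι → ℕ → ℝ) (N : ℕ)
    (hm : ∀ i n, m i n = kendall n (x i)) (hx1 : ∀ i, x i 1 = 0)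
    (ht : ∀ k, 2 ≤ k → k ≤ N → Tendsto (fun i => m i k) l (𝓝 0)) (k : ℕ) (hk : 1 ≤ k)
    (hkN : k ≤ N) : Tendsto (fun i => x i k) l (𝓝 0) := by
  induction k using Nat.strong_induction_on with
  | _ k ih =>
    obtain ⟨k, rfl⟩ : ∃ q, k = q + 1 := ⟨k - 1, by omega⟩
    rcases Nat.eq_zero_or_pos k with rfl | hk0
    · simpa [hx1] using tendsto_const_nhds
    have key : ∀ i, x i (k + 1) = m i (k + 1)
        - ∑ j ∈ Finset.range k, (k.choose (j + 1) : ℝ) * m i (j + 1) * x i (k - j) := by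
      intro i
      rw [hm, kendall_succ', Finset.sum_range_succ']
      simp [kendall_zero', hm]
    simp only [key]
    have : (0 : ℝ) = 0 - ∑ j ∈ Finset.range k, 0 := by simp
    rw [this]
    refine (ht (k + 1) (by omega) hkN).sub (tendsto_finsetSum _ fun j hj => ?_)
    rw [Finset.mem_range] at hj
    have hxj := ih (k - j) (by omega) (by omega) (by omega)
    rcases Nat.eq_zero_or_pos j with rfl | hj0
    · have : ∀ i, m i 1 = 0 := by
        intro i; rw [hm, kendall_succ']; simp [hx1]
      simpa [this] using tendsto_const_nhds
    · have := ((ht (j + 1) (by omega) (by omega)).const_mul (k.choose (j + 1) : ℝ)).mul hxj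
      simpa using this

theorem cumulant_lower {ι : Type*} (l : Filter ι) (m x : ι → ℕ → ℝ) (d : ι → ℝ) (n : ℕ)
    (hn : 2 ≤ n)
    (hm : ∀ i n, m i n = kendall n (x i)) (hx1 : ∀ i, x i 1 = 0)
    (hd : ∀ i k, 2 ≤ k → k ≤ n → |m i k| ≤ d i) (hd0 : Tendsto d l (𝓝 0))
    (hpos : ∀ i, 0 ≤ m i n) (ε : ℝ) (hε : 0 < ε) : ∀ᶠ i in l, -(ε * d i) ≤ x i n := by
  have ht : ∀ k, 2 ≤ k → k ≤ n → Tendsto (fun i => m i k) l (𝓝 0) := fun k h1 h2 =>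
    squeeze_zero_norm (fun i => by simpa using hd i k h1 h2) hd0
  have hx := cumulant_tendsto l m x n hm hx1 ht
  obtain ⟨k, rfl⟩ : ∃ q, n = q + 1 := ⟨n - 1, by omega⟩
  have key : ∀ i, x i (k + 1) = m i (k + 1)
      - ∑ j ∈ Finset.range k, (k.choose (j + 1) : ℝ) * m i (j + 1) * x i (k - j) := by
    intro i
    rw [hm, kendall_succ', Finset.sum_range_succ']
    simp [kendall_zero', hm]
  have hsum : Tendsto (fun i => ∑ j ∈ Finset.range k, (k.choose (j + 1) : ℝ) * |x i (k - j)|) l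
      (𝓝 0) := by
    have : (0 : ℝ) = ∑ j ∈ Finset.range k, 0 := by simp
    rw [this]
    refine tendsto_finsetSum _ fun j hj => ?_
    rw [Finset.mem_range] at hj
    have := (hx (k - j) (by omega) (by omega)).abs.const_mul (k.choose (j + 1) : ℝ)
    simpa using this
  filter_upwards [hsum.eventually (eventually_le_nhds hε)] with i hi
  have hdi : 0 ≤ d i := (abs_nonneg _).trans (hd i 2 le_rfl hn)
  have h1 : ∑ j ∈ Finset.range k, (k.choose (j + 1) : ℝ) * m i (j + 1) * x i (k - j)
      ≤ ∑ j ∈ Finset.range k, ((k.choose (j + 1) : ℝ) * |x i (k - j)|) * d i := by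
    refine Finset.sum_le_sum fun j hj => ?_
    rw [Finset.mem_range] at hj
    have hmj : |m i (j + 1)| ≤ d i := by
      rcases Nat.eq_zero_or_pos j with rfl | hj0
      · have : m i 1 = 0 := by
          rw [hm, kendall_succ']; simp [hx1]
        simpa [this] using hdi
      · exact hd i (j + 1) (by omega) (by omega)
    have h2 : m i (j + 1) * x i (k - j) ≤ d i * |x i (k - j)| := by
      refine (le_abs_self _).trans ?_
      rw [abs_mul]
      gcongr
    have h3 : (0 : ℝ) ≤ k.choose (j + 1) := by positivity
    nlinarith [mul_le_mul_of_nonneg_left h2 h3]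
  rw [← Finset.sum_mul] at h1
  have h4 := mul_le_mul_of_nonneg_right hi hdi
  rw [key]
  linarith [hpos i]

/-- Locally monotone functions are monotone. -/
theorem monotone_of_local (h : ℝ≥0 → ℝ)
    (hl : ∀ t, ∀ᶠ s in 𝓝 t, h (min s t) ≤ h (max s t)) : Monotone h := by
  intro a b hab
  let S : Set ℝ≥0 := {x | x ∈ Set.Icc a b ∧ ∀ y ∈ Set.Icc a x, h a ≤ h y}
  have haS : a ∈ S := ⟨⟨le_rfl, hab⟩, fun y hy => by rw [le_antisymm hy.2 hy.1]⟩
  have hbd : BddAbove S := ⟨b, fun x hx => hx.1.2⟩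
  set c := sSup S with hc
  have hac : a ≤ c := le_csSup hbd haS
  have hcb : c ≤ b := csSup_le ⟨a, haS⟩ fun x hx => hx.1.2
  have hlt : ∀ y, a ≤ y → y < c → h a ≤ h y := by
    intro y hay hyc
    obtain ⟨z, hz, hyz⟩ := exists_lt_of_lt_csSup ⟨a, haS⟩ hyc
    exact hz.2 y ⟨hay, hyz.le⟩
  have hcc : h a ≤ h c := by
    rcases hac.eq_or_lt with h1 | h1
    · rw [← h1]
    · have e1 : ∀ᶠ s in 𝓝[<] c, h (min s c) ≤ h (max s c) := nhdsWithin_le_nhds (hl c)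
      have e2 : ∀ᶠ s in 𝓝[<] c, s ∈ Set.Ioo a c := Ioo_mem_nhdsLT h1
      have : (𝓝[<] c).NeBot := nhdsLT_neBot_of_exists_lt ⟨a, h1⟩
      obtain ⟨s, hs1, hs2⟩ := (e1.and e2).exists
      rw [min_eq_left hs2.2.le, max_eq_right hs2.2.le] at hs1
      exact (hlt s hs2.1.le hs2.2).trans hs1
  rcases hcb.eq_or_lt with h1 | h1
  · rwa [← h1]
  exfalso
  obtain ⟨u, hu, hu2⟩ := exists_Ico_subset_of_mem_nhds (hl c) ⟨b, h1⟩
  obtain ⟨v, hv1, hv2⟩ := exists_between (lt_min hu h1)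
  have : v ∈ S := by
    refine ⟨⟨hac.trans hv1.le, (hv2.trans_le (min_le_right _ _)).le⟩, fun y hy => ?_⟩
    rcases lt_or_ge y c with h3 | h3
    · exact hlt y hy.1 h3
    · have := hu2 ⟨h3, hy.2.trans_lt (hv2.trans_le (min_le_left _ _))⟩
      simp only [Set.mem_ofPred_eq, min_eq_right h3, max_eq_left h3] at this
      exact hcc.trans this
  exact absurd (le_csSup hbd this) (not_le.mpr hv1)

theorem even_tangent (p : ℕ) (hp : Even p) (z y : ℝ) :
    z ^ p + p * z ^ (p - 1) * y ≤ (z + y) ^ p := by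
  have hc : ConvexOn ℝ Set.univ (fun x : ℝ => x ^ p) := hp.convexOn_pow
  have hd : HasDerivAt (fun x : ℝ => x ^ p) (p * z ^ (p - 1)) z := hasDerivAt_pow p z
  rcases lt_trichotomy y 0 with h | h | h
  · have := hc.slope_le_of_hasDerivAt (Set.mem_univ (z + y)) (Set.mem_univ z) (by linarith) hd
    rw [slope_def_field, div_le_iff₀ (by linarith)] at this
    linarith
  · simp [h]
  · have := hc.le_slope_of_hasDerivAt (Set.mem_univ z) (Set.mem_univ (z + y)) (by linarith) hd
    rw [slope_def_field, le_div_iff₀ (by linarith)] at this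
    linarith

theorem even_clarkson (k : ℕ) (hk : k ≠ 0) (u v : ℝ) :
    2 * u ^ (2 * k) + 2 * v ^ (2 * k) ≤ (u + v) ^ (2 * k) + (u - v) ^ (2 * k) := by
  simp only [pow_mul]
  have h1 := pow_add_pow_le (sq_nonneg u) (sq_nonneg v) hk
  have h2 := add_pow_le (sq_nonneg (u + v)) (sq_nonneg (u - v)) k
  have h3 : (u + v) ^ 2 + (u - v) ^ 2 = 2 * (u ^ 2 + v ^ 2) := by ring
  rw [h3, mul_pow] at h2
  obtain ⟨k, rfl⟩ : ∃ q, k = q + 1 := ⟨k - 1, by omega⟩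
  rw [Nat.add_sub_cancel, pow_succ 2 k, mul_assoc] at h2
  have h4 := le_of_mul_le_mul_left h2 (by positivity)
  linarith

theorem even_uniform (k : ℕ) (hk : k ≠ 0) (z y : ℝ) :
    z ^ (2 * k) + (2 * k : ℕ) * (z ^ (2 * k - 1) * y) + y ^ (2 * k) / 2 ^ (2 * k) ≤
      (z + y) ^ (2 * k) := by
  have h1 := even_clarkson k hk (z + y / 2) (y / 2)
  have h2 := even_tangent (2 * k) (even_two_mul k) z (y / 2)
  have e1 : z + y / 2 + y / 2 = z + y := by ring
  have e2 : z + y / 2 - y / 2 = z := by ring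
  rw [e1, e2, div_pow] at h1
  have h3 : 0 ≤ y ^ (2 * k) / 2 ^ (2 * k) := by
    rw [pow_mul y]; positivity
  linarith

theorem sub_pow_integrable {Ω : Type*} {mΩ : MeasurableSpace Ω} (μ : Measure Ω)
    (a b : Ω → ℝ) (ha : StronglyMeasurable a) (hb : StronglyMeasurable b)
    (hia : ∀ n : ℕ, Integrable (fun ω => |a ω| ^ n) μ)
    (hib : ∀ n : ℕ, Integrable (fun ω => |b ω| ^ n) μ) (n : ℕ) :
    Integrable (fun ω => (a ω - b ω) ^ n) μ := by
  refine Integrable.mono' (((hia n).add (hib n)).const_mul (2 ^ (n - 1)))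
    ((ha.sub hb).pow n).aestronglyMeasurable (ae_of_all _ fun ω => ?_)
  rw [Real.norm_eq_abs, abs_pow]
  calc |a ω - b ω| ^ n ≤ (|a ω| + |b ω|) ^ n := by
        gcongr; exact abs_sub _ _
    _ ≤ _ := add_pow_le (abs_nonneg _) (abs_nonneg _) n

theorem moment_binom {Ω : Type*} {mΩ : MeasurableSpace Ω} (μ : Measure Ω)
    (Z Y : Ω → ℝ) (hZm : StronglyMeasurable Z) (hYm : StronglyMeasurable Y)
    (hZ : ∀ n : ℕ, Integrable (fun ω => Z ω ^ n) μ)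
    (hY : ∀ n : ℕ, Integrable (fun ω => Y ω ^ n) μ)
    (hind : IndepFun Z Y μ) (n : ℕ) :
    ∫ ω, (Z ω + Y ω) ^ n ∂μ = ∑ m ∈ Finset.HasAntidiagonal.antidiagonal n,
      (n.choose m.1 : ℝ) * ((∫ ω, Z ω ^ m.1 ∂μ) * ∫ ω, Y ω ^ m.2 ∂μ) := by
  have hpw : ∀ i j : ℕ, IndepFun (fun ω => Z ω ^ i) (fun ω => Y ω ^ j) μ := fun i j =>
    hind.comp (φ := fun x : ℝ => x ^ i) (ψ := fun x : ℝ => x ^ j)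
      (by fun_prop) (by fun_prop)
  simp only [fun ω => (Commute.all (Z ω) (Y ω)).add_pow' n, nsmul_eq_mul]
  rw [integral_finset_sum]
  · refine Finset.sum_congr rfl fun m _ => ?_
    rw [integral_const_mul, (hpw m.1 m.2).integral_fun_mul_eq_mul_integral
      (hZ _).aestronglyMeasurable (hY _).aestronglyMeasurable]
  · intro m _
    exact ((hpw m.1 m.2).integrable_mul (hZ _) (hY _)).const_mul _

theorem moment_super {Ω : Type*} {mΩ : MeasurableSpace Ω} (μ : Measure Ω)
    (Z Y : Ω → ℝ)
    (hZ : ∀ n : ℕ, Integrable (fun ω => Z ω ^ n) μ)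
    (hY : ∀ n : ℕ, Integrable (fun ω => Y ω ^ n) μ)
    (hZY : ∀ n : ℕ, Integrable (fun ω => (Z ω + Y ω) ^ n) μ)
    (hind : IndepFun Z Y μ) (hY0 : ∫ ω, Y ω ∂μ = 0) (k : ℕ) (hk : k ≠ 0) :
    (∫ ω, Z ω ^ (2 * k) ∂μ) + (∫ ω, Y ω ^ (2 * k) ∂μ) / 2 ^ (2 * k)
      ≤ ∫ ω, (Z ω + Y ω) ^ (2 * k) ∂μ := by
  have hY1 : Integrable Y μ := by simpa using hY 1
  have hpw : IndepFun (fun ω => Z ω ^ (2 * k - 1)) Y μ :=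
    hind.comp (φ := fun x : ℝ => x ^ (2 * k - 1)) (ψ := fun x : ℝ => x)
      (by fun_prop) (by fun_prop)
  have hint : Integrable (fun ω => Z ω ^ (2 * k - 1) * Y ω) μ := hpw.integrable_mul (hZ _) hY1
  have h0 : ∫ ω, Z ω ^ (2 * k - 1) * Y ω ∂μ = 0 := by
    rw [hpw.integral_fun_mul_eq_mul_integral (hZ _).aestronglyMeasurable
      hY1.aestronglyMeasurable, hY0, mul_zero]
  have h1 := (hZ (2 * k)).add (hint.const_mul ((2 * k : ℕ) : ℝ))
  have h2 := (hY (2 * k)).div_const (2 ^ (2 * k))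
  have := integral_mono (h1.add h2) (hZY (2 * k))
    (fun ω => even_uniform k hk (Z ω) (Y ω))
  rw [integral_add' h1 h2, integral_add' (hZ (2 * k)) (hint.const_mul ((2 * k : ℕ) : ℝ)),
    integral_const_mul, h0, integral_div, mul_zero, add_zero] at this
  exact this

theorem moment_small {Ω : Type*} {mΩ : MeasurableSpace Ω} (μ : Measure Ω)
    [IsProbabilityMeasure μ] {ι : Type*} (l : Filter ι) (Y : ι → Ω → ℝ)
    (hYm : ∀ i, StronglyMeasurable (Y i))
    (hY : ∀ (i) (n : ℕ), Integrable (fun ω => Y i ω ^ n) μ)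
    (hprob : ∀ ε : ℝ, 0 < ε → Tendsto (fun i => μ {ω | ε ≤ |Y i ω|}) l (𝓝 0))
    (k : ℕ) (hk : k ≠ 0) (B : ℝ) (hB : ∀ᶠ i in l, ∫ ω, Y i ω ^ (2 * (2 * k)) ∂μ ≤ B) :
    Tendsto (fun i => ∫ ω, Y i ω ^ (2 * k) ∂μ) l (𝓝 0) := by
  have hnn : ∀ i, 0 ≤ ∫ ω, Y i ω ^ (2 * k) ∂μ := fun i =>
    integral_nonneg fun ω => (even_two_mul k).pow_nonneg _
  rw [Metric.tendsto_nhds]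
  intro η hη
  set δ : ℝ := η / (4 * (|B| + 1)) with hδ
  have hBp : 0 < |B| + 1 := by positivity
  have hδ0 : 0 < δ := by positivity
  set ε : ℝ := min (η / 4) 1 with hε
  have hε0 : 0 < ε := lt_min (by positivity) one_pos
  have hp : Tendsto (fun i => μ.real {ω | ε ≤ |Y i ω|}) l (𝓝 0) := by
    have := (ENNReal.tendsto_toReal ENNReal.zero_ne_top).comp (hprob ε hε0)
    simpa [Measure.real, Function.comp_def] using this
  filter_upwards [hB, hp.eventually (eventually_le_nhds (show 0 < δ * (η / 4) by positivity))]
    with i hBi hpi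
  rw [Real.dist_eq, sub_zero, abs_of_nonneg (hnn i)]
  set A : Set Ω := {ω | ε ≤ |Y i ω|} with hA
  have hAm : MeasurableSet A :=
    measurableSet_le measurable_const (by
      have := (hYm i).measurable
      fun_prop)
  have hpt : ∀ ω, Y i ω ^ (2 * k) ≤
      ε + δ * Y i ω ^ (2 * (2 * k)) + A.indicator (fun _ => (1 / δ : ℝ)) ω := by
    intro ω
    have e1 : Y i ω ^ (2 * (2 * k)) = (Y i ω ^ (2 * k)) ^ 2 := by
      rw [← pow_mul]; congr 1; ring
    have e2 : 0 ≤ Y i ω ^ (2 * k) := (even_two_mul k).pow_nonneg _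
    rw [e1]
    by_cases hω : ω ∈ A
    · rw [Set.indicator_of_mem hω]
      set w := Y i ω ^ (2 * k)
      have : δ * w ^ 2 + 1 / δ - w = δ * (w - 1 / (2 * δ)) ^ 2 + 3 / (4 * δ) := by
        field_simp; ring
      have h3 : 0 ≤ δ * (w - 1 / (2 * δ)) ^ 2 + 3 / (4 * δ) := by positivity
      linarith
    · rw [Set.indicator_of_notMem hω]
      have hlt : |Y i ω| < ε := by simpa [hA] using hω
      have h3 : Y i ω ^ (2 * k) ≤ ε := by
        rw [← (even_two_mul k).pow_abs]
        calc |Y i ω| ^ (2 * k) ≤ ε ^ (2 * k) := by gcongr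
          _ ≤ ε := pow_le_of_le_one hε0.le (min_le_right _ _) (by omega)
      have h4 : 0 ≤ δ * (Y i ω ^ (2 * k)) ^ 2 := by positivity
      linarith
  have i1 : Integrable (fun ω => ε + δ * Y i ω ^ (2 * (2 * k))) μ :=
    (integrable_const ε).add ((hY i _).const_mul δ)
  have i2 : Integrable (A.indicator (fun _ => (1 / δ : ℝ))) μ :=
    (integrable_const _).indicator hAm
  have h5 := integral_mono (hY i (2 * k)) (i1.add i2) hpt
  rw [integral_add' i1 i2, integral_add (integrable_const ε) ((hY i _).const_mul δ),
    integral_const_mul, integral_indicator_const _ hAm] at h5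
  simp only [integral_const, probReal_univ, one_smul, smul_eq_mul] at h5
  have h6 : δ * ∫ ω, Y i ω ^ (2 * (2 * k)) ∂μ ≤ η / 4 := by
    calc _ ≤ δ * (|B| + 1) := by
            gcongr; linarith [le_abs_self B]
      _ = η / 4 := by rw [hδ]; field_simp
  have h7 : μ.real A * (1 / δ) ≤ η / 4 := by
    rw [mul_one_div, div_le_iff₀ hδ0]; linarith
  have h8 : ε ≤ η / 4 := min_le_left _ _
  linarith

/-- **Proposition 1 (monotonicity).** For even `n ≥ 2`, the cumulant function `F_n` of a
centered additive process with finite moments of all orders is nondecreasing. -/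
theorem additive_cumulant_monotone_of_even
    {Ω : Type*} {mΩ : MeasurableSpace Ω} (μ : Measure Ω) [IsProbabilityMeasure μ]
    (X : ℝ≥0 → Ω → ℝ) (hXmeas : ∀ t, StronglyMeasurable (X t))
    (hX0 : ∀ ω, X 0 ω = 0)
    (hindep : ∀ s t : ℝ≥0, s ≤ t →
      Indep (MeasurableSpace.comap (fun ω => X t ω - X s ω) (inferInstance : MeasurableSpace ℝ))
        (MeasureTheory.Filtration.natural X hXmeas s) μ)
    (hcontP : ∀ (t : ℝ≥0) (ε : ℝ), 0 < ε →
      Tendsto (fun s => μ {ω | ε ≤ |X s ω - X t ω|}) (𝓝 t) (𝓝 0))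
    (hcadlag : ∀ ω, IsCadlag fun t => X t ω)
    (hmom : ∀ (n : ℕ) (t : ℝ≥0), Integrable (fun ω => |X t ω| ^ n) μ)
    (hcent : ∀ t : ℝ≥0, ∫ ω, X t ω ∂μ = 0)
    (F : ℕ → ℝ≥0 → ℝ)
    (hF : ∀ n, 2 ≤ n → ∀ t : ℝ≥0,
      ∫ ω, X t ω ^ n ∂μ = kendall n fun k => if k = 1 then 0 else F k t)
    (n : ℕ) (hn : 2 ≤ n) (heven : Even n) :
    Monotone (F n) := by
  have hpow : ∀ (t : ℝ≥0) (k : ℕ), Integrable (fun ω => X t ω ^ k) μ := fun t k => by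
    simpa [hX0] using sub_pow_integrable μ (X t) (X 0) (hXmeas t) (hXmeas 0)
      (fun n => hmom n t) (fun n => hmom n 0) k
  have hipow : ∀ (s t : ℝ≥0) (k : ℕ), Integrable (fun ω => (X t ω - X s ω) ^ k) μ :=
    fun s t k => sub_pow_integrable μ (X t) (X s) (hXmeas t) (hXmeas s)
      (fun n => hmom n t) (fun n => hmom n s) k
  have hind : ∀ s t : ℝ≥0, s ≤ t → IndepFun (X s) (fun ω => X t ω - X s ω) μ := by
    intro s t hst
    refine IndepFun.symm ?_
    rw [IndepFun_iff_Indep]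
    exact indep_of_indep_of_le_right (hindep s t hst)
      (le_iSup₂_of_le (f := fun j (_ : j ≤ s) => MeasurableSpace.comap (X j) _) s le_rfl le_rfl)
  have hX1 : ∀ t, Integrable (X t) μ := fun t => by simpa using hpow t 1
  have hic : ∀ s t : ℝ≥0, ∫ ω, (X t ω - X s ω) ∂μ = 0 := fun s t => by
    rw [integral_sub (hX1 t) (hX1 s), hcent, hcent, sub_zero]
  have hsuper : ∀ s t : ℝ≥0, s ≤ t → ∀ k : ℕ, k ≠ 0 →
      (∫ ω, X s ω ^ (2 * k) ∂μ) + (∫ ω, (X t ω - X s ω) ^ (2 * k) ∂μ) / 2 ^ (2 * k)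
        ≤ ∫ ω, X t ω ^ (2 * k) ∂μ := by
    intro s t hst k hk
    have := moment_super μ (X s) (fun ω => X t ω - X s ω) (hpow s) (hipow s t)
      (fun n => by simpa using hpow t n) (hind s t hst) (hic s t) k hk
    simpa using this
  have hcum : ∀ (t : ℝ≥0) (k : ℕ),
      ∫ ω, X t ω ^ k ∂μ = kendall k fun k => if k = 1 then 0 else F k t := by
    intro t k
    match k with
    | 0 => simp [kendall_zero']
    | 1 => rw [kendall_succ']; simp [hcent]
    | k + 2 => exact hF (k + 2) (by omega) t
  have hinc : ∀ s t : ℝ≥0, s ≤ t → ∀ k : ℕ, ∫ ω, (X t ω - X s ω) ^ k ∂μ =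
      kendall k fun k => (if k = 1 then 0 else F k t) - (if k = 1 then 0 else F k s) := by
    intro s t hst k
    refine kendall_increment (fun k => ∫ ω, X s ω ^ k ∂μ) (fun k => ∫ ω, X t ω ^ k ∂μ)
      (fun k => ∫ ω, (X t ω - X s ω) ^ k ∂μ) _ _ (hcum s) (hcum t) (fun j => ?_) k
    have := moment_binom μ (X s) (fun ω => X t ω - X s ω) (hXmeas s)
      ((hXmeas t).sub (hXmeas s)) (hpow s) (hipow s t) (hind s t hst) j
    simpa using this
  have hn0 : n ≠ 0 := by omega
  set G : ℝ≥0 → ℝ := fun t =>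
    2 ^ (2 * 1) * (∫ ω, X t ω ^ (2 * 1) ∂μ) + 2 ^ (2 * n) * ∫ ω, X t ω ^ (2 * n) ∂μ with hG
  have hmon : ∀ ε : ℝ, 0 < ε → Monotone (fun t => F n t + ε * G t) := by
    intro ε hε
    refine monotone_of_local _ fun t => ?_
    let Y : ℝ≥0 → Ω → ℝ := fun s ω => X (max s t) ω - X (min s t) ω
    have hYp : ∀ s (k : ℕ), Integrable (fun ω => Y s ω ^ k) μ := fun s k =>
      hipow (min s t) (max s t) k
    have hYm : ∀ s, StronglyMeasurable (Y s) := fun s => (hXmeas _).sub (hXmeas _)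
    have hYabs : ∀ s ω, |Y s ω| = |X s ω - X t ω| := by
      intro s ω
      rcases le_total s t with h | h
      · simp only [Y, max_eq_right h, min_eq_left h]; exact abs_sub_comm _ _
      · simp only [Y, max_eq_left h, min_eq_right h]
    have hmm : ∀ s, min s t ≤ max s t := fun s => min_le_max
    have hmomle : ∀ s (k : ℕ), k ≠ 0 → ∫ ω, Y s ω ^ (2 * k) ∂μ ≤
        2 ^ (2 * k) * (∫ ω, X (max s t) ω ^ (2 * k) ∂μ)
          - 2 ^ (2 * k) * ∫ ω, X (min s t) ω ^ (2 * k) ∂μ := by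
      intro s k hk
      have := hsuper _ _ (hmm s) k hk
      have h2 : (0 : ℝ) < 2 ^ (2 * k) := by positivity
      rw [← le_sub_iff_add_le', div_le_iff₀ h2] at this
      simp only [Y]
      linarith
    have hsm : ∀ k : ℕ, k ≠ 0 → Tendsto (fun s => ∫ ω, Y s ω ^ (2 * k) ∂μ) (𝓝 t) (𝓝 0) := by
      intro k hk
      refine moment_small μ (𝓝 t) Y hYm hYp ?_ k hk
        (2 ^ (2 * (2 * k)) * ∫ ω, X (t + 1) ω ^ (2 * (2 * k)) ∂μ) ?_
      · intro ε hε
        simpa only [hYabs] using hcontP t ε hε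
      · have : ∀ᶠ s in 𝓝 t, s < t + 1 := eventually_lt_nhds (by simp)
        filter_upwards [this] with s hs
        have h1 := hmomle s (2 * k) (by omega)
        have h2 := hsuper (max s t) (t + 1) (max_le hs.le (by simp)) (2 * k) (by omega)
        have h3 : 0 ≤ (∫ ω, (X (t + 1) ω - X (max s t) ω) ^ (2 * (2 * k)) ∂μ)
            / 2 ^ (2 * (2 * k)) :=
          div_nonneg (integral_nonneg fun ω => (even_two_mul _).pow_nonneg _) (by positivity)
        have h4 : 0 ≤ 2 ^ (2 * (2 * k)) * ∫ ω, X (min s t) ω ^ (2 * (2 * k)) ∂μ :=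
          mul_nonneg (by positivity) (integral_nonneg fun ω => (even_two_mul _).pow_nonneg _)
        have h5 : ∫ ω, X (max s t) ω ^ (2 * (2 * k)) ∂μ
            ≤ ∫ ω, X (t + 1) ω ^ (2 * (2 * k)) ∂μ := by linarith
        have h6 := mul_le_mul_of_nonneg_left h5 (show (0 : ℝ) ≤ 2 ^ (2 * (2 * k)) by positivity)
        linarith
    let d : ℝ≥0 → ℝ := fun s => (∫ ω, Y s ω ^ (2 * 1) ∂μ) + ∫ ω, Y s ω ^ (2 * n) ∂μ
    have hd0 : Tendsto d (𝓝 t) (𝓝 0) := by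
      simpa using (hsm 1 one_ne_zero).add (hsm n hn0)
    have hlow := cumulant_lower (𝓝 t) (fun s k => ∫ ω, Y s ω ^ k ∂μ)
      (fun s k => (if k = 1 then 0 else F k (max s t)) - (if k = 1 then 0 else F k (min s t)))
      d n hn (fun s k => hinc _ _ (hmm s) k) (fun s => by simp) ?_ hd0
      (fun s => integral_nonneg fun ω => heven.pow_nonneg _) ε hε
    · filter_upwards [hlow] with s hs
      have hn1 : n ≠ 1 := by omega
      simp only [hn1, if_false] at hs
      have hdG : d s ≤ G (max s t) - G (min s t) := by
        have h1 := hmomle s 1 one_ne_zero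
        have h2 := hmomle s n hn0
        simp only [d, hG]
        linarith
      have := mul_le_mul_of_nonneg_left hdG hε.le
      linarith
    · intro s k hk1 hk2
      simp only [d]
      rw [← integral_add (hYp s _) (hYp s _)]
      refine (abs_integral_le_integral_abs).trans
        (integral_mono (hYp s k).abs ((hYp s _).add (hYp s _)) fun ω => ?_)
      simp only [Pi.add_apply]
      rw [abs_pow, ← (even_two_mul 1).pow_abs (Y s ω), ← (even_two_mul n).pow_abs (Y s ω)]
      have h0 := abs_nonneg (Y s ω)
      rcases le_total |Y s ω| 1 with h | h
      · have := pow_le_pow_of_le_one h0 h (show 2 * 1 ≤ k by omega)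
        have : 0 ≤ |Y s ω| ^ (2 * n) := by positivity
        linarith
      · have := pow_le_pow_right₀ h (show k ≤ 2 * n by omega)
        have : 0 ≤ |Y s ω| ^ (2 * 1) := by positivity
        linarith
  intro a b hab
  have hlim : ∀ c, Tendsto (fun ε : ℝ => F n c + ε * G c) (𝓝[>] 0) (𝓝 (F n c)) := by
    intro c
    have : Tendsto (fun ε : ℝ => F n c + ε * G c) (𝓝 0) (𝓝 (F n c + 0 * G c)) :=
      Continuous.tendsto (by fun_prop) 0
    rw [zero_mul, add_zero] at this
    exact this.mono_left nhdsWithin_le_nhds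
  refine le_of_tendsto_of_tendsto (hlim a) (hlim b) ?_
  filter_upwards [self_mem_nhdsWithin] with ε hε
  exact hmon ε hε hab
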